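/- If u is a positive solution of ∂_t u = Δu on a graph, and at a point (x₀,t₀) one has Δu(x₀,t₀) = 0 and t ↦ |Δu|(x₀,t) is differentiable at t₀, then (Δ − ∂_t)|Δu|(x₀,t₀) ≥ 0. -/

import Mathlib

open Real Finset MeasureTheory

variable {V : Type*}

/-- The μ-Laplacian of a weighted graph. -/
noncomputable def lapl (N : V → Finset V) (w : V → V → ℝ) (μ : V → ℝ)
    (f : V → ℝ) (x : V) : ℝ :=
  (1 / μ x) * ∑ y ∈ N x, w x y * (f y - f x)

/-- The carré du champ operator Γ. -/
noncomputable def gam (N : V → Finset V) (w : V → V → ℝ) (μ : V → ℝ)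
    (f g : V → ℝ) (x : V) : ℝ :=
  (1 / (2 * μ x)) * ∑ y ∈ N x, w x y * (f y - f x) * (g y - g x)

/-- The weighted degree. -/
noncomputable def deg (N : V → Finset V) (w : V → V → ℝ) (x : V) : ℝ :=
  ∑ y ∈ N x, w x y

/-- The operator Γ̃₂ of Bauer et al. -/
noncomputable def gam2 (N : V → Finset V) (w : V → V → ℝ) (μ : V → ℝ)
    (f : V → ℝ) (x : V) : ℝ :=
  (1 / 2) * lapl N w μ (gam N w μ f f) x
    - gam N w μ f (fun y => lapl N w μ (fun z => f z ^ 2) y / (2 * f y)) x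

/-! At a zero `(x₀, t₀)` of `Δu` the function `|Δu|` attains its global minimum `0` over space-time.
At a space-time minimum the time derivative vanishes, and the spatial Laplacian is a weighted sum of
nonnegative increments. -/

section MinimumPrinciple

variable {N : V → Finset V} {w : V → V → ℝ} {μ : V → ℝ} {x₀ : V}

theorem lapl_nonneg_of_forall_le (hμ : 0 < μ x₀) (hw : ∀ y ∈ N x₀, 0 ≤ w x₀ y) {f : V → ℝ}
    (hf : ∀ y ∈ N x₀, f x₀ ≤ f y) : 0 ≤ lapl N w μ f x₀ :=
  mul_nonneg (one_div_nonneg.mpr hμ.le) <|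
    Finset.sum_nonneg fun y hy => mul_nonneg (hw y hy) (sub_nonneg.mpr (hf y hy))

theorem lapl_sub_deriv_nonneg_of_isLocalMin (hμ : 0 < μ x₀) (hw : ∀ y ∈ N x₀, 0 ≤ w x₀ y)
    {f : V → ℝ → ℝ} {t₀ D : ℝ} (hD : HasDerivAt (f x₀) D t₀)
    (hspace : ∀ y ∈ N x₀, f x₀ t₀ ≤ f y t₀) (htime : IsLocalMin (f x₀) t₀) :
    0 ≤ lapl N w μ (fun y => f y t₀) x₀ - D := by
  rw [htime.hasDerivAt_eq_zero hD, sub_zero]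
  exact lapl_nonneg_of_forall_le hμ hw hspace

theorem abs_lap_supersolution_at_zero_general (hμ : 0 < μ x₀) (hw : ∀ y ∈ N x₀, 0 ≤ w x₀ y)
    {v : V → ℝ → ℝ} {t₀ D : ℝ} (hD : HasDerivAt (fun t => |v x₀ t|) D t₀) (h0 : v x₀ t₀ = 0) :
    0 ≤ lapl N w μ (fun y => |v y t₀|) x₀ - D := by
  have abs_min : ∀ y t, |v x₀ t₀| ≤ |v y t| := fun y t => by
    rw [h0, abs_zero]
    exact abs_nonneg _
  exact lapl_sub_deriv_nonneg_of_isLocalMin (f := fun y t => |v y t|) hμ hw hD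
    (fun y _ => abs_min y t₀) (Filter.Eventually.of_forall (abs_min x₀))

end MinimumPrinciple

theorem abs_lap_supersolution_at_zero
    (N : V → Finset V) (w : V → V → ℝ) (μ : V → ℝ)
    (hμ : ∀ x, 0 < μ x) (hw : ∀ x y, y ∈ N x → 0 < w x y)
    (u : V → ℝ → ℝ) (hu : ∀ x t, 0 < u x t)
    (hheat : ∀ x t, HasDerivAt (u x) (lapl N w μ (fun y => u y t) x) t)
    (x₀ : V) (t₀ D : ℝ)
    (hD : HasDerivAt (fun t => |lapl N w μ (fun y => u y t) x₀|) D t₀)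
    (h0 : lapl N w μ (fun y => u y t₀) x₀ = 0) :
    0 ≤ lapl N w μ (fun y => |lapl N w μ (fun z => u z t₀) y|) x₀ - D :=
  abs_lap_supersolution_at_zero_general (v := fun y t => lapl N w μ (fun z => u z t) y)
    (hμ x₀) (fun y hy => (hw x₀ y hy).le) hD h0
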